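/- There exists an absolute constant C > 0 such that for every ν ∈ (0,1] there exists a C^∞ function h₀ : ℝ → ℝ, 2π-periodic, with ∫_{−π}^{π} h₀(x) dx = 0, sup_{x ∈ ℝ} |h₀'(x)| ≤ 1, and E(h₀) ≤ C √ν, where E(h₀) = ∫_{−π}^{π} ( (ν/2) h₀''(x)² + ¼ (h₀'(x)² − 1)² ) dx. -/

import Mathlib

open Real MeasureTheory Set

noncomputable section

/-- The 1D slope-selection energy `E(h) = ∫_{−π}^{π} ((ν/2)h''² + ¼(h'²−1)²) dx`. -/
noncomputable def energy1D (ν : ℝ) (h : ℝ → ℝ) : ℝ :=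
  ∫ x in Icc (-Real.pi) Real.pi,
    ((ν / 2) * (deriv (deriv h) x) ^ 2 + (1 / 4) * ((deriv h x) ^ 2 - 1) ^ 2)

/-!
The function `arcsin ∘ sin` is the sawtooth with slopes `±1`. Dividing the sine by `√(1 + ε)` keeps
it away from the singularities `±1` of `arcsin` and gives a smooth odd function `h` with
`h'² = cos² / (ε + cos²)`. The deficit `q = 1 - h'² = ε / (ε + cos²)` lies in `[0, 1]` and satisfies
`h''² = q³ sin² / ε`, so that the energy density is at most `(ν / (2ε) + 1/4) q`. Since `q` is a
multiple of the derivative of an angle, `∫ q = 2π √(ε / (1 + ε)) ≤ 2π √ε`, and `ε = ν` balances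
the two terms.
-/

theorem setIntegral_eq_zero_of_odd {G E : Type*} [InvolutiveNeg G] [MeasurableSpace G]
    [MeasurableNeg G] [NormedAddCommGroup E] [NormedSpace ℝ E] {μ : Measure G} [μ.IsNegInvariant]
    {f : G → E} (hf : Function.Odd f) {s : Set G} (hs : Neg.neg ⁻¹' s = s) :
    ∫ x in s, f x ∂μ = 0 := by
  have : IsAddTorsionFree E := .of_isTorsionFree ℝ E
  have hneg : ∫ x in s, f (-x) ∂μ = ∫ x in s, f x ∂μ := by
    simpa only [hs] using (Measure.measurePreserving_neg μ).setIntegral_preimage_emb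
      (MeasurableEquiv.neg G).measurableEmbedding f s
  rw [← self_eq_neg, ← integral_neg, ← hneg]
  simp only [hf _]

theorem hasDerivAt_arctan_div {f g : ℝ → ℝ} {f' g' x : ℝ} (hf : HasDerivAt f f' x)
    (hg : HasDerivAt g g' x) (hgx : g x ≠ 0) :
    HasDerivAt (fun y ↦ arctan (f y / g y)) ((f' * g x - f x * g') / (g x ^ 2 + f x ^ 2)) x := by
  have hsum_sq : g x ^ 2 + f x ^ 2 ≠ 0 := by positivity
  refine (hf.fun_div hg hgx).arctan.congr_deriv ?_
  field_simp

section EllipticAngle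

variable {k : ℝ}

theorem cos_sq_add_mul_sin_sq_pos (hk : 0 < k) (x : ℝ) : 0 < cos x ^ 2 + k * sin x ^ 2 := by
  rcases eq_or_ne (sin x) 0 with hsin | hsin
  · have hcos : cos x ^ 2 = 1 := by rw [cos_sq', hsin]; norm_num
    rw [hcos]
    positivity
  · positivity

-- `arctan (k * tan x)` has the same derivative but jumps at the poles of `tan`. The addition
-- formula turns `arctan (tan x) - arctan (k * tan x)` into the smooth function subtracted here.
theorem hasDerivAt_sub_arctan_sin_mul_cos (hk : 0 < k) (x : ℝ) :
    HasDerivAt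
      (fun x ↦ x - arctan ((1 - k) * (sin x * cos x) / (cos x ^ 2 + k * sin x ^ 2)))
      (k / (cos x ^ 2 + k ^ 2 * sin x ^ 2)) x := by
  have hden := cos_sq_add_mul_sin_sq_pos hk x
  have hden_sq := cos_sq_add_mul_sin_sq_pos (pow_pos hk 2) x
  have hsum_sq : (cos x ^ 2 + k * sin x ^ 2) ^ 2 + ((1 - k) * (sin x * cos x)) ^ 2 =
      cos x ^ 2 + k ^ 2 * sin x ^ 2 := by
    linear_combination (cos x ^ 2 + k ^ 2 * sin x ^ 2) * sin_sq_add_cos_sq x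
  have hnum_deriv : HasDerivAt (fun y ↦ (1 - k) * (sin y * cos y))
      ((1 - k) * (cos x ^ 2 - sin x ^ 2)) x :=
    (((hasDerivAt_sin x).fun_mul (hasDerivAt_cos x)).const_mul (1 - k)).congr_deriv (by ring)
  have hden_deriv : HasDerivAt (fun y ↦ cos y ^ 2 + k * sin y ^ 2)
      (-2 * ((1 - k) * (sin x * cos x))) x :=
    (((hasDerivAt_cos x).fun_pow 2).fun_add
      (((hasDerivAt_sin x).fun_pow 2).const_mul k)).congr_deriv (by push_cast; ring)
  have hwronskian : (1 - k) * (cos x ^ 2 - sin x ^ 2) * (cos x ^ 2 + k * sin x ^ 2) -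
      (1 - k) * (sin x * cos x) * (-2 * ((1 - k) * (sin x * cos x))) =
      (1 - k) * (cos x ^ 2 - k * sin x ^ 2) := by
    linear_combination (1 - k) * (cos x ^ 2 - k * sin x ^ 2) * sin_sq_add_cos_sq x
  refine ((hasDerivAt_id x).sub
    (hasDerivAt_arctan_div hnum_deriv hden_deriv hden.ne')).congr_deriv ?_
  rw [hwronskian, hsum_sq]
  field_simp
  linear_combination k * sin_sq_add_cos_sq x

theorem integral_div_cos_sq_add_sq_mul_sin_sq (hk : 0 < k) :
    ∫ x in Icc (-π) π, k / (cos x ^ 2 + k ^ 2 * sin x ^ 2) = 2 * π := by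
  have hcont : Continuous fun x ↦ k / (cos x ^ 2 + k ^ 2 * sin x ^ 2) := by
    fun_prop (disch := exact fun x ↦ (cos_sq_add_mul_sin_sq_pos (pow_pos hk 2) x).ne')
  rw [integral_Icc_eq_integral_Ioc, ← intervalIntegral.integral_of_le (by linarith [pi_pos]),
    intervalIntegral.integral_eq_sub_of_hasDerivAt
      (fun x _ ↦ hasDerivAt_sub_arctan_sin_mul_cos hk x) (hcont.intervalIntegrable _ _)]
  simp only [sin_pi, sin_neg, neg_zero, zero_mul, mul_zero, zero_div, arctan_zero]
  ring

end EllipticAngle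

/-- The sawtooth `arcsin ∘ sin` with its tips smoothed out at the scale `√ε`, which is the
low-energy profile. -/
def roundedSawtooth (ε x : ℝ) : ℝ := arcsin (sin x / √(1 + ε))

/-- The deficit `1 - h'²` of the slope of `h = roundedSawtooth ε`, in closed form. It is
concentrated in neighbourhoods of width `√ε` of the tips `π / 2 + π ℤ`. -/
def slopeDeficit (ε x : ℝ) : ℝ := ε / (ε + cos x ^ 2)

theorem odd_roundedSawtooth (ε : ℝ) : Function.Odd (roundedSawtooth ε) := fun x ↦ by
  simp only [roundedSawtooth, sin_neg, neg_div, arcsin_neg]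

theorem periodic_roundedSawtooth (ε : ℝ) : Function.Periodic (roundedSawtooth ε) (2 * π) :=
  fun x ↦ by simp only [roundedSawtooth, sin_add_two_pi]

section RoundedSawtooth

variable {ε : ℝ}

theorem abs_sin_div_sqrt_one_add_lt_one (hε : 0 < ε) (x : ℝ) : |sin x / √(1 + ε)| < 1 := by
  have hone_lt : 1 < √(1 + ε) := lt_sqrt_of_sq_lt (by linarith)
  rw [abs_div, abs_of_pos (zero_lt_one.trans hone_lt), div_lt_one (by positivity)]
  exact (abs_sin_le_one x).trans_lt hone_lt

theorem contDiff_roundedSawtooth (hε : 0 < ε) {n : WithTop ℕ∞} :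
    ContDiff ℝ n (roundedSawtooth ε) := by
  refine contDiff_iff_contDiffAt.mpr fun x ↦ ?_
  obtain ⟨hlower, hupper⟩ := abs_lt.mp (abs_sin_div_sqrt_one_add_lt_one hε x)
  exact (contDiffAt_arcsin hlower.ne' hupper.ne).comp x (contDiff_sin.contDiffAt.div_const _)

theorem deriv_roundedSawtooth (hε : 0 < ε) :
    deriv (roundedSawtooth ε) = fun x ↦ cos x / √(ε + cos x ^ 2) := by
  ext x
  obtain ⟨hlower, hupper⟩ := abs_lt.mp (abs_sin_div_sqrt_one_add_lt_one hε x)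
  have hcos : 1 - (sin x / √(1 + ε)) ^ 2 = (ε + cos x ^ 2) / (1 + ε) := by
    rw [div_pow, sq_sqrt (by positivity), cos_sq']
    field_simp
    ring
  have hderiv := (hasDerivAt_arcsin hlower.ne' hupper.ne).comp x
    ((hasDerivAt_sin x).div_const √(1 + ε))
  refine hderiv.deriv.trans ?_
  rw [hcos, sqrt_div (by positivity)]
  field_simp

theorem deriv_deriv_roundedSawtooth (hε : 0 < ε) (x : ℝ) :
    deriv (deriv (roundedSawtooth ε)) x = -(ε * sin x) / √(ε + cos x ^ 2) ^ 3 := by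
  have hpos : 0 < ε + cos x ^ 2 := by positivity
  have hsqrt_pos : 0 < √(ε + cos x ^ 2) := sqrt_pos.mpr hpos
  have hsq : √(ε + cos x ^ 2) ^ 2 = ε + cos x ^ 2 := sq_sqrt hpos.le
  have hderiv := (hasDerivAt_cos x).div
    ((((hasDerivAt_cos x).pow 2).const_add ε).sqrt hpos.ne') hsqrt_pos.ne'
  rw [deriv_roundedSawtooth hε]
  refine hderiv.deriv.trans ?_
  simp only [Pi.pow_apply]
  generalize √(ε + cos x ^ 2) = r at *
  field_simp
  rw [hsq]
  push_cast
  ring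

theorem slopeDeficit_nonneg (hε : 0 ≤ ε) (x : ℝ) : 0 ≤ slopeDeficit ε x := by
  unfold slopeDeficit; positivity

theorem slopeDeficit_le_one (hε : 0 ≤ ε) (x : ℝ) : slopeDeficit ε x ≤ 1 :=
  div_le_one_of_le₀ (le_add_of_nonneg_right (sq_nonneg _)) (by positivity)

theorem continuous_slopeDeficit (hε : 0 < ε) : Continuous (slopeDeficit ε) := by
  have hne (x : ℝ) : ε + cos x ^ 2 ≠ 0 := by positivity
  unfold slopeDeficit
  fun_prop (disch := exact hne)

theorem sq_deriv_roundedSawtooth (hε : 0 < ε) (x : ℝ) :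
    deriv (roundedSawtooth ε) x ^ 2 = 1 - slopeDeficit ε x := by
  have hpos : 0 < ε + cos x ^ 2 := by positivity
  simp only [deriv_roundedSawtooth hε, slopeDeficit, div_pow, sq_sqrt hpos.le]
  field_simp
  ring

theorem sq_deriv_deriv_roundedSawtooth (hε : 0 < ε) (x : ℝ) :
    deriv (deriv (roundedSawtooth ε)) x ^ 2 = slopeDeficit ε x ^ 3 * sin x ^ 2 / ε := by
  have hpos : 0 < ε + cos x ^ 2 := by positivity
  rw [deriv_deriv_roundedSawtooth hε, slopeDeficit, div_pow, pow_right_comm, sq_sqrt hpos.le]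
  field_simp

theorem abs_deriv_roundedSawtooth_le_one (hε : 0 < ε) (x : ℝ) :
    |deriv (roundedSawtooth ε) x| ≤ 1 := by
  rw [← sq_le_one_iff_abs_le_one, sq_deriv_roundedSawtooth hε]
  linarith [slopeDeficit_nonneg hε.le x]

theorem integral_slopeDeficit (hε : 0 < ε) :
    ∫ x in Icc (-π) π, slopeDeficit ε x = 2 * π * √(ε / (1 + ε)) := by
  set k := √(ε / (1 + ε))
  have hk : 0 < k := by positivity
  have hk_sq : k ^ 2 = ε / (1 + ε) := sq_sqrt (by positivity)
  have hdeficit (x : ℝ) : slopeDeficit ε x = k * (k / (cos x ^ 2 + k ^ 2 * sin x ^ 2)) := by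
    have hden : cos x ^ 2 + k ^ 2 * sin x ^ 2 = (ε + cos x ^ 2) / (1 + ε) := by
      rw [hk_sq, sin_sq]
      field_simp
      ring
    rw [hden, ← mul_div_assoc, ← sq, hk_sq, slopeDeficit]
    field_simp
  simp only [hdeficit, integral_const_mul, integral_div_cos_sq_add_sq_mul_sin_sq hk]
  ring

theorem energyDensity_roundedSawtooth_le {ν : ℝ} (hε : 0 < ε) (hν : 0 ≤ ν) (x : ℝ) :
    ν / 2 * deriv (deriv (roundedSawtooth ε)) x ^ 2 +
        1 / 4 * (deriv (roundedSawtooth ε) x ^ 2 - 1) ^ 2 ≤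
      (ν / (2 * ε) + 1 / 4) * slopeDeficit ε x := by
  rw [sq_deriv_deriv_roundedSawtooth hε, sq_deriv_roundedSawtooth hε]
  have hq_nonneg := slopeDeficit_nonneg hε.le x
  have hq_le_one := slopeDeficit_le_one hε.le x
  generalize slopeDeficit ε x = q at *
  have hbending : q ^ 3 * sin x ^ 2 ≤ q :=
    (mul_le_of_le_one_right (by positivity) (sin_sq_le_one x)).trans
      (pow_le_of_le_one hq_nonneg hq_le_one three_ne_zero)
  have hslope : q ^ 2 ≤ q := pow_le_of_le_one hq_nonneg hq_le_one two_ne_zero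
  calc ν / 2 * (q ^ 3 * sin x ^ 2 / ε) + 1 / 4 * (1 - q - 1) ^ 2
      = ν / (2 * ε) * (q ^ 3 * sin x ^ 2) + 1 / 4 * q ^ 2 := by field_simp; ring
    _ ≤ ν / (2 * ε) * q + 1 / 4 * q := by gcongr
    _ = (ν / (2 * ε) + 1 / 4) * q := by ring

theorem energy1D_roundedSawtooth_le {ν : ℝ} (hε : 0 < ε) (hν : 0 ≤ ν) :
    energy1D ν (roundedSawtooth ε) ≤ (ν / (2 * ε) + 1 / 4) * (2 * π * √ε) := by
  have hint : IntegrableOn (fun x ↦ (ν / (2 * ε) + 1 / 4) * slopeDeficit ε x) (Icc (-π) π) :=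
    (continuous_const.mul (continuous_slopeDeficit hε)).integrableOn_Icc
  calc energy1D ν (roundedSawtooth ε)
      ≤ ∫ x in Icc (-π) π, (ν / (2 * ε) + 1 / 4) * slopeDeficit ε x :=
        integral_mono_of_nonneg (.of_forall fun x ↦ by simp only [Pi.zero_apply]; positivity) hint
          (.of_forall fun x ↦ energyDensity_roundedSawtooth_le hε hν x)
    _ = (ν / (2 * ε) + 1 / 4) * (2 * π * √(ε / (1 + ε))) := by
        rw [integral_const_mul, integral_slopeDeficit hε]
    _ ≤ (ν / (2 * ε) + 1 / 4) * (2 * π * √ε) := by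
        gcongr
        exact div_le_self hε.le (by linarith)

end RoundedSawtooth

theorem stmt16_general :
    ∃ C : ℝ, 0 < C ∧ ∀ ν : ℝ, 0 < ν →
      ∃ h₀ : ℝ → ℝ,
        ContDiff ℝ (⊤ : ℕ∞) h₀ ∧
        Function.Periodic h₀ (2 * Real.pi) ∧
        (∫ x in Icc (-Real.pi) Real.pi, h₀ x) = 0 ∧
        (∀ x : ℝ, |deriv h₀ x| ≤ 1) ∧
        energy1D ν h₀ ≤ C * Real.sqrt ν := by
  refine ⟨3 / 2 * π, by positivity, fun ν hν ↦ ⟨roundedSawtooth ν, contDiff_roundedSawtooth hν,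
    periodic_roundedSawtooth ν, setIntegral_eq_zero_of_odd (odd_roundedSawtooth ν) (by simp),
    abs_deriv_roundedSawtooth_le_one hν, ?_⟩⟩
  calc energy1D ν (roundedSawtooth ν)
      ≤ (ν / (2 * ν) + 1 / 4) * (2 * π * √ν) := energy1D_roundedSawtooth_le hν hν.le
    _ = 3 / 2 * π * √ν := by field_simp; ring

/-- Proposition 5.1, low-energy data: there is an absolute constant
`C > 0` such that for every `ν ∈ (0,1]` there is a smooth `2π`-periodic mean-zero `h₀`
with `‖h₀'‖_∞ ≤ 1` and `E(h₀) ≤ C√ν`. -/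
theorem stmt16 :
    ∃ C : ℝ, 0 < C ∧ ∀ ν : ℝ, ν ∈ Ioc (0 : ℝ) 1 →
      ∃ h₀ : ℝ → ℝ,
        ContDiff ℝ (⊤ : ℕ∞) h₀ ∧
        Function.Periodic h₀ (2 * Real.pi) ∧
        (∫ x in Icc (-Real.pi) Real.pi, h₀ x) = 0 ∧
        (∀ x : ℝ, |deriv h₀ x| ≤ 1) ∧
        energy1D ν h₀ ≤ C * Real.sqrt ν :=
  let ⟨C, hC, hprofile⟩ := stmt16_general
  ⟨C, hC, fun ν hν ↦ hprofile ν hν.1⟩
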